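/- Let n ≥ 1, let 1 < p₁, p₂ < ∞ and 1 < r < ∞ satisfy 1/r + 1 = 1/p₁ + 1/p₂. There exists a constant C = C(n, p₁, p₂) such that for all measurable functions f, g : ℝⁿ → ℝ with finite weak-L^{p₁} and weak-L^{p₂} quasinorms respectively, the convolution f ∗ g is defined almost everywhere and satisfies ‖f ∗ g‖_{L^{r,∞}(ℝⁿ)} ≤ C ‖f‖_{L^{p₁,∞}(ℝⁿ)} ‖g‖_{L^{p₂,∞}(ℝⁿ)} (the weak-type case of Young's convolution inequality in Lorentz spaces). -/

import Mathlib

open MeasureTheory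
open scoped ENNReal

/-- The weak-`L^p` (Lorentz `L^{p,∞}`) quasinorm of a measurable function on `ℝⁿ`
(Lebesgue measure): `‖f‖_{L^{p,∞}} = sup_{α > 0} α · |{x : |f x| > α}|^{1/p}`. -/
noncomputable def weakLpNorm (n : ℕ) (p : ℝ) (f : EuclideanSpace ℝ (Fin n) → ℝ) : ℝ≥0∞ :=
  ⨆ (α : ℝ) (_ : 0 < α), ENNReal.ofReal α * volume {x | α < |f x|} ^ (1 / p)

lemma wy_small (p s : ℝ) (hp : 0 < p) (hps : p < s) : ∃ K : ℝ≥0∞, K ≠ ∞ ∧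
    ∀ {X : Type} [MeasurableSpace X] (μ : Measure X) (u : X → ℝ) (δ : ℝ≥0∞), Measurable u →
      (∀ x, 0 ≤ u x) →
      (∀ t : ℝ, 0 < t → μ {x | t < u x} ≤ ENNReal.ofReal (t ^ (-p)) * δ) →
      ∫⁻ x, ENNReal.ofReal (min (u x) 1 ^ s) ∂μ ≤ K * δ := by
  have hint : IntegrableOn (fun t : ℝ => t ^ (s - p - 1)) (Set.Ioc 0 1) := by
    have := intervalIntegral.intervalIntegrable_rpow' (a := 0) (b := 1) (r := s - p - 1)
      (by linarith)
    rwa [intervalIntegrable_iff_integrableOn_Ioc_of_le zero_le_one] at this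
  refine ⟨ENNReal.ofReal s * ∫⁻ t in Set.Ioc (0:ℝ) 1, ENNReal.ofReal (t ^ (s - p - 1)),
    ENNReal.mul_ne_top ENNReal.ofReal_ne_top hint.lintegral_lt_top.ne, ?_⟩
  intro X _ μ u δ hu h0 hd
  rw [lintegral_rpow_eq_lintegral_meas_lt_mul μ (f := fun x => min (u x) 1)
    (Filter.Eventually.of_forall fun x => le_min (h0 x) zero_le_one)
    (hu.min measurable_const).aemeasurable (by linarith : 0 < s), mul_assoc]
  gcongr
  rw [← lintegral_mul_const'' _ (by fun_prop)]
  rw [← lintegral_indicator measurableSet_Ioi, ← lintegral_indicator measurableSet_Ioc]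
  apply lintegral_mono
  intro t
  by_cases ht : 0 < t
  · by_cases ht1 : t ≤ 1
    · rw [Set.indicator_of_mem (show t ∈ Set.Ioi (0:ℝ) from ht),
        Set.indicator_of_mem (show t ∈ Set.Ioc (0:ℝ) 1 from ⟨ht, ht1⟩)]
      have h1 : μ {a | t < min (u a) 1} ≤ ENNReal.ofReal (t ^ (-p)) * δ :=
        (measure_mono (fun a (ha : t < min (u a) 1) => (lt_min_iff.1 ha).1)).trans (hd t ht)
      calc μ {a | t < min (u a) 1} * ENNReal.ofReal (t ^ (s - 1))
          ≤ ENNReal.ofReal (t ^ (-p)) * δ * ENNReal.ofReal (t ^ (s - 1)) := by gcongr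
        _ = ENNReal.ofReal (t ^ (-p)) * ENNReal.ofReal (t ^ (s - 1)) * δ := by ring
        _ = _ := by
          rw [← ENNReal.ofReal_mul (by positivity), ← Real.rpow_add ht]
          congr 3; ring
    · have : {a | t < min (u a) 1} = ∅ := by
        ext a
        simp only [Set.mem_ofPred_eq, lt_min_iff, Set.mem_empty_iff_false, iff_false]
        exact fun h => ht1 h.2.le
      rw [Set.indicator_of_mem (show t ∈ Set.Ioi (0:ℝ) from ht), this]
      simp
  · rw [Set.indicator_of_notMem (show t ∉ Set.Ioi (0:ℝ) from ht)]
    exact zero_le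

lemma wy_large (p : ℝ) (hp : 1 < p) : ∃ K : ℝ≥0∞, K ≠ ∞ ∧
    ∀ {X : Type} [MeasurableSpace X] (μ : Measure X) (u : X → ℝ) (δ : ℝ≥0∞), Measurable u →
      (∀ x, 0 ≤ u x) →
      (∀ t : ℝ, 0 < t → μ {x | t < u x} ≤ ENNReal.ofReal (t ^ (-p)) * δ) →
      ∫⁻ x, ENNReal.ofReal (if 1 < u x then u x else 0) ∂μ ≤ K * δ := by
  have hint : IntegrableOn (fun t : ℝ => t ^ (-p)) (Set.Ioi 1) :=
    integrableOn_Ioi_rpow_of_lt (by linarith) one_pos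
  refine ⟨1 + ∫⁻ t in Set.Ioi (1:ℝ), ENNReal.ofReal (t ^ (-p)),
    ENNReal.add_ne_top.2 ⟨ENNReal.one_ne_top, hint.lintegral_lt_top.ne⟩, ?_⟩
  intro X _ μ u δ hu h0 hd
  rw [lintegral_eq_lintegral_meas_lt μ (f := fun x => if 1 < u x then u x else 0)
    (Filter.Eventually.of_forall fun x => by
      show 0 ≤ (if 1 < u x then u x else 0)
      split_ifs; exacts [h0 x, le_rfl])
    (Measurable.ite (measurableSet_lt measurable_const hu) hu measurable_const).aemeasurable]
  rw [← Set.Ioc_union_Ioi_eq_Ioi (zero_le_one' ℝ),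
    lintegral_union measurableSet_Ioi (Set.Ioc_disjoint_Ioi le_rfl), add_mul]
  gcongr
  · calc ∫⁻ t in Set.Ioc (0:ℝ) 1, μ {a | t < if 1 < u a then u a else 0}
        ≤ ∫⁻ t in Set.Ioc (0:ℝ) 1, δ := by
          refine setLIntegral_mono measurable_const fun t ht => ?_
          have := hd 1 one_pos
          rw [Real.one_rpow, ENNReal.ofReal_one, one_mul] at this
          refine (measure_mono fun a ha => ?_).trans this
          simp only [Set.mem_ofPred_eq] at ha ⊢
          by_contra hc
          rw [if_neg hc] at ha
          exact absurd ha (not_lt.2 ht.1.le)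
      _ = 1 * δ := by simp
  · rw [← lintegral_mul_const'' _ (by fun_prop)]
    refine setLIntegral_mono (by fun_prop) fun t ht => ?_
    have ht0 : (0:ℝ) < t := lt_trans one_pos ht
    refine (measure_mono fun a ha => ?_).trans (hd t ht0)
    simp only [Set.mem_ofPred_eq] at ha ⊢
    split_ifs at ha
    · exact ha
    · exact absurd ha (not_lt.2 ht0.le)

/-- pointwise inequality -/
lemma wy_pt (s s' : ℝ) (hs : s.HolderConjugate s') (a b : ℝ) (ha : 0 ≤ a) (hb : 0 ≤ b) :
    a * b ≤ (min a 1 ^ s + (if 1 < a then a else 0)) + (min b 1 ^ s' + (if 1 < b then b else 0))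
      + (if 1 < a then a else 0) * (if 1 < b then b else 0) := by
  have h1 : 0 ≤ min a 1 ^ s := Real.rpow_nonneg (le_min ha zero_le_one) _
  have h2 : 0 ≤ min b 1 ^ s' := Real.rpow_nonneg (le_min hb zero_le_one) _
  split_ifs with h h' h'
  · nlinarith
  · nlinarith
  · nlinarith
  · have := Real.young_inequality_of_nonneg ha hb hs
    rw [min_eq_left (not_lt.1 h), min_eq_left (not_lt.1 h')] at *
    have e1 := div_le_self h1 hs.lt.le
    have e2 := div_le_self h2 hs.symm.lt.le
    linarith

lemma wy_core (p₁ p₂ r : ℝ) (hp₁ : 1 < p₁) (hp₂ : 1 < p₂) (hr : 1 < r)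
    (hrpq : 1 / r + 1 = 1 / p₁ + 1 / p₂) : ∃ K : ℝ≥0∞, K ≠ ∞ ∧ K ≠ 0 ∧
    ∀ (n : ℕ) (u v : EuclideanSpace ℝ (Fin n) → ℝ) (δ : ℝ≥0∞), δ ≠ 0 → δ ≠ ∞ →
      Measurable u → Measurable v → (∀ x, 0 ≤ u x) → (∀ x, 0 ≤ v x) →
      (∀ t : ℝ, 0 < t → volume {x | t < u x} ≤ ENNReal.ofReal (t ^ (-p₁)) * δ) →
      (∀ t : ℝ, 0 < t → volume {x | t < v x} ≤ ENNReal.ofReal (t ^ (-p₂)) * δ) →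
      (∀ᵐ x, ∫⁻ y, ENNReal.ofReal (u (x - y) * v y) < ∞) ∧
      volume {x | K * δ < ∫⁻ y, ENNReal.ofReal (u (x - y) * v y)} ≤ K * δ := by
  have hr0 : 0 < 1 / r := by positivity
  have i1 : 1 / p₁ < 1 := by rw [div_lt_one (by linarith)]; exact hp₁
  have i2 : 1 / p₂ < 1 := by rw [div_lt_one (by linarith)]; exact hp₂
  have w1 : 0 < 1 / p₁ - 1 / r / 2 := by linarith
  have w2 : 0 < 1 / p₂ - 1 / r / 2 := by linarith
  obtain ⟨s, hs_def⟩ : ∃ s, s = (1 / p₁ - 1 / r / 2)⁻¹ := ⟨_, rfl⟩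
  obtain ⟨s', hs'_def⟩ : ∃ s, s = (1 / p₂ - 1 / r / 2)⁻¹ := ⟨_, rfl⟩
  have hs : p₁ < s := by
    rw [hs_def, lt_inv_comm₀ (by linarith) w1, ← one_div]; linarith
  have hs' : p₂ < s' := by
    rw [hs'_def, lt_inv_comm₀ (by linarith) w2, ← one_div]; linarith
  have hc : s.HolderConjugate s' := by
    rw [Real.holderConjugate_iff]
    refine ⟨by linarith, ?_⟩
    rw [hs_def, hs'_def, inv_inv, inv_inv]; linarith
  obtain ⟨A₁, hA₁, HA₁⟩ := wy_small p₁ s (by linarith) hs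
  obtain ⟨A₂, hA₂, HA₂⟩ := wy_small p₂ s' (by linarith) hs'
  obtain ⟨B₁, hB₁, HB₁⟩ := wy_large p₁ hp₁
  obtain ⟨B₂, hB₂, HB₂⟩ := wy_large p₂ hp₂
  refine ⟨(A₁ + B₁) + (A₂ + B₂) + B₁ * B₂ + 1, by finiteness, by simp, ?_⟩
  intro n u v δ hδ0 hδ hu hv hu0 hv0 hud hvd
  have a1 := HA₁ volume u δ hu hu0 hud
  have a2 := HA₂ volume v δ hv hv0 hvd
  have b1 := HB₁ volume u δ hu hu0 hud
  have b2 := HB₂ volume v δ hv hv0 hvd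
  set u2 : EuclideanSpace ℝ (Fin n) → ℝ≥0∞ :=
    fun x => ENNReal.ofReal (if 1 < u x then u x else 0) with hu2
  set v2 : EuclideanSpace ℝ (Fin n) → ℝ≥0∞ :=
    fun x => ENNReal.ofReal (if 1 < v x then v x else 0) with hv2
  have mu2 : Measurable u2 := ENNReal.measurable_ofReal.comp
    (Measurable.ite (measurableSet_lt measurable_const hu) hu measurable_const)
  have mv2 : Measurable v2 := ENNReal.measurable_ofReal.comp
    (Measurable.ite (measurableSet_lt measurable_const hv) hv measurable_const)
  set u1 : EuclideanSpace ℝ (Fin n) → ℝ≥0∞ := fun x => ENNReal.ofReal (min (u x) 1 ^ s) with hu1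
  set v1 : EuclideanSpace ℝ (Fin n) → ℝ≥0∞ := fun x => ENNReal.ofReal (min (v x) 1 ^ s') with hv1
  have mu1 : Measurable u1 := by fun_prop
  have mv1 : Measurable v1 := by fun_prop
  set S : EuclideanSpace ℝ (Fin n) → ℝ≥0∞ := fun x => ∫⁻ y, u2 (x - y) * v2 y with hS
  have mS : Measurable S := by
    apply Measurable.lintegral_prod_right'
      (f := fun z : EuclideanSpace ℝ (Fin n) × EuclideanSpace ℝ (Fin n) => u2 (z.1 - z.2) * v2 z.2)
    fun_prop
  have hSint : ∫⁻ x, S x ≤ B₁ * B₂ * δ * δ := by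
    rw [hS, lintegral_lintegral_swap (by
      apply Measurable.aemeasurable
      show Measurable fun z : EuclideanSpace ℝ (Fin n) × EuclideanSpace ℝ (Fin n) =>
        u2 (z.1 - z.2) * v2 z.2
      fun_prop)]
    calc ∫⁻ y, ∫⁻ x, u2 (x - y) * v2 y = ∫⁻ y, (∫⁻ x, u2 x) * v2 y := by
          congr 1; ext y
          rw [lintegral_mul_const _ (by fun_prop), lintegral_sub_right_eq_self u2]
      _ = (∫⁻ x, u2 x) * ∫⁻ y, v2 y := lintegral_const_mul _ mv2
      _ ≤ (B₁ * δ) * (B₂ * δ) := by gcongr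
      _ = _ := by ring
  have hT : ∀ x, ∫⁻ y, ENNReal.ofReal (u (x - y) * v y) ≤
      ((A₁ + B₁) + (A₂ + B₂)) * δ + S x := by
    intro x
    calc ∫⁻ y, ENNReal.ofReal (u (x - y) * v y)
        ≤ ∫⁻ y, ((u1 (x - y) + u2 (x - y)) + (v1 y + v2 y) + u2 (x - y) * v2 y) := by
          apply lintegral_mono
          intro y
          have h1 : 0 ≤ min (u (x - y)) 1 ^ s := Real.rpow_nonneg (le_min (hu0 _) zero_le_one) _
          have h2 : 0 ≤ min (v y) 1 ^ s' := Real.rpow_nonneg (le_min (hv0 _) zero_le_one) _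
          have h3 : 0 ≤ (if 1 < u (x - y) then u (x - y) else 0) := by
            split_ifs; exacts [hu0 _, le_rfl]
          have h4 : 0 ≤ (if 1 < v y then v y else 0) := by
            split_ifs; exacts [hv0 _, le_rfl]
          simp only [hu1, hu2, hv1, hv2]
          rw [← ENNReal.ofReal_add h1 h3, ← ENNReal.ofReal_add h2 h4, ← ENNReal.ofReal_mul h3,
            ← ENNReal.ofReal_add (by positivity) (by positivity),
            ← ENNReal.ofReal_add (by positivity) (by positivity)]
          exact ENNReal.ofReal_le_ofReal (wy_pt s s' hc _ _ (hu0 _) (hv0 _))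
      _ = ((∫⁻ y, u1 y) + ∫⁻ y, u2 y) + ((∫⁻ y, v1 y) + ∫⁻ y, v2 y) + S x := by
          rw [lintegral_add_left (by fun_prop), lintegral_add_left (by fun_prop),
            lintegral_add_left (by fun_prop), lintegral_add_left (by fun_prop),
            lintegral_sub_left_eq_self u1, lintegral_sub_left_eq_self u2]
      _ ≤ (A₁ * δ + B₁ * δ) + (A₂ * δ + B₂ * δ) + S x := by gcongr
      _ = _ := by ring
  constructor
  · have : ∀ᵐ x, S x < ∞ :=
      ae_lt_top mS (lt_of_le_of_lt hSint (by finiteness)).ne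
    filter_upwards [this] with x hx
    refine (hT x).trans_lt ?_
    exact ENNReal.add_lt_top.2 ⟨by finiteness, hx⟩
  · calc _ ≤ volume {x | δ ≤ S x} := by
          refine measure_mono fun x hx => ?_
          simp only [Set.mem_ofPred_eq] at hx ⊢
          by_contra hlt
          refine absurd (hx.trans_le (hT x)) (not_lt.2 ?_)
          calc _ ≤ ((A₁ + B₁) + (A₂ + B₂)) * δ + δ := by gcongr; exact (not_le.1 hlt).le
            _ = ((A₁ + B₁) + (A₂ + B₂) + 0 + 1) * δ := by ring
            _ ≤ _ := by gcongr; exact zero_le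
      _ ≤ (∫⁻ x, S x) / δ := meas_ge_le_lintegral_div mS.aemeasurable hδ0 hδ
      _ ≤ B₁ * B₂ * δ * δ / δ := by gcongr
      _ = B₁ * B₂ * δ := ENNReal.mul_div_cancel_right hδ0 hδ
      _ ≤ _ := by
        gcongr
        exact le_add_right le_add_self

lemma wy_dist (n : ℕ) (p : ℝ) (hp : 1 < p) (f : EuclideanSpace ℝ (Fin n) → ℝ) (a l : ℝ)
    (ha : 0 < a) (hl : 0 < l) (h : weakLpNorm n p f ≤ ENNReal.ofReal a) (t : ℝ) (ht : 0 < t) :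
    volume {x | t < |f x| / (a * l ^ (1 / p))} ≤ ENNReal.ofReal (t ^ (-p)) * ENNReal.ofReal l⁻¹ := by
  have hp0 : 0 < p := by linarith
  have hM : 0 < a * l ^ (1 / p) := by positivity
  have hset : {x | t < |f x| / (a * l ^ (1 / p))} = {x | t * (a * l ^ (1 / p)) < |f x|} := by
    ext x; simp only [Set.mem_ofPred_eq]; rw [lt_div_iff₀ hM]
  rw [hset]
  have h1 : ENNReal.ofReal (t * (a * l ^ (1 / p))) *
      volume {x | t * (a * l ^ (1 / p)) < |f x|} ^ (1 / p) ≤ ENNReal.ofReal a :=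
    (le_iSup₂ (f := fun (α : ℝ) (_ : 0 < α) =>
      ENNReal.ofReal α * volume {x | α < |f x|} ^ (1 / p)) (t * (a * l ^ (1 / p)))
      (by positivity)).trans h
  have h2 : volume {x | t * (a * l ^ (1 / p)) < |f x|} ^ (1 / p) ≤
      ENNReal.ofReal (t⁻¹ * (l ^ (1 / p))⁻¹) := by
    rw [mul_comm, ← ENNReal.le_div_iff_mul_le (Or.inl (by simp; positivity)) (Or.inl (by simp)),
      ← ENNReal.ofReal_div_of_pos (by positivity)] at h1
    refine h1.trans (le_of_eq ?_)
    congr 1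
    field_simp
  have h3 := ENNReal.rpow_le_rpow h2 hp0.le
  rw [← ENNReal.rpow_mul, one_div_mul_cancel hp0.ne', ENNReal.rpow_one,
    ENNReal.ofReal_rpow_of_pos (by positivity)] at h3
  rw [← ENNReal.ofReal_mul (by positivity)]
  refine h3.trans (le_of_eq ?_)
  congr 1
  rw [Real.mul_rpow (by positivity) (by positivity), Real.inv_rpow ht.le, Real.rpow_neg ht.le,
    Real.inv_rpow (by positivity), ← Real.rpow_mul hl.le, one_div_mul_cancel hp0.ne', Real.rpow_one]

lemma wy_conv (n : ℕ) (f g : EuclideanSpace ℝ (Fin n) → ℝ) (M N : ℝ) (hM : 0 < M) (hN : 0 < N)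
    (x : EuclideanSpace ℝ (Fin n)) :
    ∫⁻ y, ‖f (x - y) * g y‖ₑ =
      ENNReal.ofReal (M * N) * ∫⁻ y, ENNReal.ofReal (|f (x - y)| / M * (|g y| / N)) := by
  rw [← lintegral_const_mul' _ _ ENNReal.ofReal_ne_top]
  congr 1
  ext y
  rw [← ENNReal.ofReal_mul (by positivity), Real.enorm_eq_ofReal_abs, abs_mul]
  congr 1
  field_simp

/-- **Weak-type Young (O'Neil) convolution inequality.**
Let `1 < p₁, p₂, r < ∞` with `1/r + 1 = 1/p₁ + 1/p₂`. There is `C = C(n, p₁, p₂) > 0`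
such that for all measurable `f, g` with finite weak-`L^{p₁}` and weak-`L^{p₂}` quasinorms,
the convolution `f ∗ g` is defined a.e. and
`‖f ∗ g‖_{L^{r,∞}} ≤ C ‖f‖_{L^{p₁,∞}} ‖g‖_{L^{p₂,∞}}`. -/
theorem weak_young_convolution
    (n : ℕ) (hn : 1 ≤ n) (p₁ p₂ r : ℝ) (hp₁ : 1 < p₁) (hp₂ : 1 < p₂) (hr : 1 < r)
    (hrpq : 1 / r + 1 = 1 / p₁ + 1 / p₂) :
    ∃ C : ℝ, 0 < C ∧
      ∀ f g : EuclideanSpace ℝ (Fin n) → ℝ, Measurable f → Measurable g →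
        weakLpNorm n p₁ f < ∞ → weakLpNorm n p₂ g < ∞ →
          (∀ᵐ x : EuclideanSpace ℝ (Fin n), Integrable fun y => f (x - y) * g y) ∧
          weakLpNorm n r (fun x => ∫ y, f (x - y) * g y) ≤
            ENNReal.ofReal C * weakLpNorm n p₁ f * weakLpNorm n p₂ g := by
  obtain ⟨K, hK, hK0, H⟩ := wy_core p₁ p₂ r hp₁ hp₂ hr hrpq
  obtain ⟨k, hkdef⟩ : ∃ k, k = K.toReal := ⟨_, rfl⟩
  have hk : 0 < k := hkdef ▸ ENNReal.toReal_pos hK0 hK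
  have hKk : K = ENNReal.ofReal k := by rw [hkdef, ENNReal.ofReal_toReal hK]
  have hr0 : 0 < r := by linarith
  refine ⟨k * k ^ (1 / r), by positivity, ?_⟩
  intro f g hf hg hA hB
  -- the common application of the core lemma
  have main : ∀ a b l : ℝ, 0 < a → 0 < b → 0 < l → weakLpNorm n p₁ f ≤ ENNReal.ofReal a →
      weakLpNorm n p₂ g ≤ ENNReal.ofReal b → _ := fun a b l ha hb hl hfa hgb =>
    H n (fun x => |f x| / (a * l ^ (1 / p₁))) (fun x => |g x| / (b * l ^ (1 / p₂)))
      (ENNReal.ofReal l⁻¹) (by simp; positivity) ENNReal.ofReal_ne_top (by fun_prop) (by fun_prop)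
      (fun x => by positivity) (fun x => by positivity)
      (wy_dist n p₁ hp₁ f a l ha hl hfa) (wy_dist n p₂ hp₂ g b l hb hl hgb)
  constructor
  · have hfa : weakLpNorm n p₁ f ≤ ENNReal.ofReal ((weakLpNorm n p₁ f).toReal + 1) :=
      (ENNReal.ofReal_toReal hA.ne).symm.le.trans (ENNReal.ofReal_le_ofReal (by linarith))
    have hgb : weakLpNorm n p₂ g ≤ ENNReal.ofReal ((weakLpNorm n p₂ g).toReal + 1) :=
      (ENNReal.ofReal_toReal hB.ne).symm.le.trans (ENNReal.ofReal_le_ofReal (by linarith))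
    have ha : 0 < (weakLpNorm n p₁ f).toReal + 1 := by positivity
    have hb : 0 < (weakLpNorm n p₂ g).toReal + 1 := by positivity
    filter_upwards [(main _ _ 1 ha hb one_pos hfa hgb).1] with x hx
    refine ⟨by fun_prop, ?_⟩
    rw [HasFiniteIntegral, wy_conv n f g
      (((weakLpNorm n p₁ f).toReal + 1) * 1 ^ (1 / p₁))
      (((weakLpNorm n p₂ g).toReal + 1) * 1 ^ (1 / p₂)) (by positivity) (by positivity) x]
    exact ENNReal.mul_lt_top ENNReal.ofReal_lt_top hx
  · have hC0 : ENNReal.ofReal (k * k ^ (1 / r)) ≠ 0 := by simp; positivity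
    rw [mul_assoc, mul_comm, ← ENNReal.div_le_iff hC0 ENNReal.ofReal_ne_top]
    refine ENNReal.le_mul_of_forall_lt (Or.inr hB.ne) (Or.inl hA.ne) fun a' ha' b' hb' => ?_
    rcases eq_or_ne a' ∞ with rfl | ha't
    · rw [ENNReal.top_mul (ne_bot_of_gt hb')]; exact le_top
    rcases eq_or_ne b' ∞ with rfl | hb't
    · rw [ENNReal.mul_top (ne_bot_of_gt ha')]; exact le_top
    rw [ENNReal.div_le_iff hC0 ENNReal.ofReal_ne_top]
    obtain ⟨a, rfl⟩ : ∃ a, a' = ENNReal.ofReal a := ⟨_, (ENNReal.ofReal_toReal ha't).symm⟩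
    obtain ⟨b, rfl⟩ : ∃ b, b' = ENNReal.ofReal b := ⟨_, (ENNReal.ofReal_toReal hb't).symm⟩
    have ha : 0 < a := ENNReal.ofReal_pos.1 (pos_of_gt ha')
    have hb : 0 < b := ENNReal.ofReal_pos.1 (pos_of_gt hb')
    refine iSup₂_le fun α hα => ?_
    obtain ⟨l, hldef⟩ : ∃ l, l = (α / (k * a * b)) ^ r := ⟨_, rfl⟩
    have hl : 0 < l := by rw [hldef]; positivity
    have hlr : l ^ (1 / r) = α / (k * a * b) := by
      rw [hldef, ← Real.rpow_mul (by positivity), mul_one_div_cancel hr0.ne', Real.rpow_one]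
    have hαl : α = k * a * b * l ^ (1 / r) := by rw [hlr]; field_simp
    have hMN : (a * l ^ (1 / p₁)) * (b * l ^ (1 / p₂)) * (k * l⁻¹) = α := by
      have : l ^ (1 / p₁) * l ^ (1 / p₂) = l ^ (1 / r) * l := by
        rw [← Real.rpow_add hl, ← hrpq, Real.rpow_add hl, Real.rpow_one]
      calc _ = a * b * (l ^ (1 / p₁) * l ^ (1 / p₂)) * (k * l⁻¹) := by ring
        _ = k * a * b * l ^ (1 / r) * (l * l⁻¹) := by rw [this]; ring
        _ = α := by rw [mul_inv_cancel₀ hl.ne', mul_one, ← hαl]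
    have hv := (main a b l ha hb hl ha'.le hb'.le).2
    rw [hKk, ← ENNReal.ofReal_mul hk.le] at hv
    have hv2 : volume {x | α < |∫ y, f (x - y) * g y|} ≤ ENNReal.ofReal (k * l⁻¹) := by
      refine (measure_mono fun x hx => ?_).trans hv
      simp only [Set.mem_ofPred_eq] at hx ⊢
      have h1 : ENNReal.ofReal α < ∫⁻ y, ‖f (x - y) * g y‖ₑ := by
        refine lt_of_lt_of_le ?_ (enorm_integral_le_lintegral_enorm _)
        rw [Real.enorm_eq_ofReal_abs]
        exact (ENNReal.ofReal_lt_ofReal_iff (hα.trans hx)).2 hx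
      rw [wy_conv n f g (a * l ^ (1 / p₁)) (b * l ^ (1 / p₂)) (by positivity) (by positivity) x,
        ← hMN, ENNReal.ofReal_mul (by positivity)] at h1
      exact lt_of_mul_lt_mul_left' h1
    calc ENNReal.ofReal α * volume {x | α < |∫ y, f (x - y) * g y|} ^ (1 / r)
        ≤ ENNReal.ofReal α * ENNReal.ofReal (k * l⁻¹) ^ (1 / r) := by gcongr
      _ = ENNReal.ofReal a * ENNReal.ofReal b * ENNReal.ofReal (k * k ^ (1 / r)) := by
        rw [ENNReal.ofReal_rpow_of_pos (by positivity), ← ENNReal.ofReal_mul hα.le,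
          ← ENNReal.ofReal_mul ha.le, ← ENNReal.ofReal_mul (by positivity)]
        congr 1
        rw [Real.mul_rpow hk.le (by positivity), Real.inv_rpow hl.le, hlr]
        field_simp
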